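/- arXiv:math/0609634 — 2 statements merged into one kernel-verified Lean document; each statement's English description precedes it below -/
import Mathlib

section
/- Let x = (S, Λ, a) be an abelian-group k-parameter whose underlying combinatorial k-parameter (S, Λ) is free. Then G_x is a free abelian group. -/
open Cardinal

namespace Sh883

/-- A "restricted tuple": the result of replacing the `m`-th coordinate of a `(k+1)`-tuple
of functions `ℕ → S` by a finite sequence (list) of elements of `S`, keeping the other
coordinates. -/
structure Res (k : ℕ) (S : Type u) where
  m : Fin (k + 1)
  seq : List S
  rest : (l : Fin (k + 1)) → l ≠ m → ℕ → S

/-- `η̄↾⟨m,n⟩` : replace the `m`-th coordinate of `η̄` by the finite sequence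
`⟨η_m(0), …, η_m(n-1)⟩`. -/
def restrictAt {k : ℕ} {S : Type u} (η : Fin (k + 1) → ℕ → S) (m : Fin (k + 1)) (n : ℕ) :
    Res k S :=
  ⟨m, List.ofFn fun i : Fin n => η m i, fun l _ => η l⟩

/-- `Λ_m = {η̄↾⟨m,n⟩ : η̄ ∈ Λ, n ∈ ℕ}`. -/
def LambdaResAt {k : ℕ} {S : Type u} (Λ : Set (Fin (k + 1) → ℕ → S)) (m : Fin (k + 1)) :
    Set (Res k S) :=
  {ν | ∃ η ∈ Λ, ∃ n : ℕ, ν = restrictAt η m n}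

/-- `Λ_0 ∪ … ∪ Λ_k`. -/
def LambdaRes {k : ℕ} {S : Type u} (Λ : Set (Fin (k + 1) → ℕ → S)) : Set (Res k S) :=
  ⋃ m, LambdaResAt Λ m

/-- The generators of the group `G_x`: `x_ν` for `ν ∈ Λ_0 ∪ … ∪ Λ_k`, `y_{η̄,n}` for
`η̄ ∈ Λ`, `n ∈ ℕ`, and `z`. -/
inductive Gen (k : ℕ) (S : Type u) (Λ : Set (Fin (k + 1) → ℕ → S)) : Type u where
  | X : ↥(LambdaRes Λ) → Gen k S Λ
  | Y : ↥Λ → ℕ → Gen k S Λ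
  | Z : Gen k S Λ

/-- `η̄↾⟨m,n⟩` as an element of `Λ_0 ∪ … ∪ Λ_k`, for `η̄ ∈ Λ`. -/
def resMem {k : ℕ} {S : Type u} {Λ : Set (Fin (k + 1) → ℕ → S)} (η : ↥Λ) (m : Fin (k + 1))
    (n : ℕ) : ↥(LambdaRes Λ) :=
  ⟨restrictAt (η : Fin (k + 1) → ℕ → S) m n, Set.mem_iUnion.2 ⟨m, (η : _), η.2, n, rfl⟩⟩

/-- The relation element `n!·y_{η̄,n+1} − y_{η̄,n} − a(η̄,n)·z − Σ_{m≤k} x_{η̄↾⟨m,n⟩}`. -/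
def relEl {k : ℕ} {S : Type u} {Λ : Set (Fin (k + 1) → ℕ → S)} (a : ↥Λ → ℕ → ℤ)
    (η : ↥Λ) (n : ℕ) : FreeAbelianGroup (Gen k S Λ) :=
  (n.factorial : ℤ) • FreeAbelianGroup.of (Gen.Y η (n + 1))
    - FreeAbelianGroup.of (Gen.Y η n)
    - a η n • FreeAbelianGroup.of Gen.Z
    - ∑ m : Fin (k + 1), FreeAbelianGroup.of (Gen.X (resMem η m n))

/-- The subgroup of relations. -/
def relSub {k : ℕ} {S : Type u} {Λ : Set (Fin (k + 1) → ℕ → S)} (a : ↥Λ → ℕ → ℤ) :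
    AddSubgroup (FreeAbelianGroup (Gen k S Λ)) :=
  AddSubgroup.closure {g | ∃ (η : ↥Λ) (n : ℕ), g = relEl a η n}

/-- The group `G_x` of the abelian-group `k`-parameter `x = (S, Λ, a)`. -/
abbrev Gx {k : ℕ} {S : Type u} {Λ : Set (Fin (k + 1) → ℕ → S)} (a : ↥Λ → ℕ → ℤ) : Type u :=
  FreeAbelianGroup (Gen k S Λ) ⧸ relSub a


/-- Freeness of a combinatorial `k`-parameter `(S, Λ)`: there is an enumeration
`⟨η̄^α : α < α*⟩` of `Λ` without repetitions such that for every `α` there are `m ≤ k`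
and `n ∈ ℕ` with `η̄^α↾⟨m,n⟩ ∉ {η̄^β↾⟨m,n⟩ : β < α}`. -/
def CombFree {k : ℕ} {S : Type u} (Λ : Set (Fin (k + 1) → ℕ → S)) : Prop :=
  ∃ (o : Ordinal.{u}) (e : Set.Iio o → (Fin (k + 1) → ℕ → S)),
    Function.Injective e ∧ Set.range e = Λ ∧
    ∀ α : Set.Iio o, ∃ (m : Fin (k + 1)) (n : ℕ),
      ∀ β : Set.Iio o, (β : Ordinal) < (α : Ordinal) →
        restrictAt (e α) m n ≠ restrictAt (e β) m n

end Sh883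

namespace Sh883

theorem lift_congr_closure {I : Type u} {A : Type u} [AddCommGroup A] (f g : I → A) (T : Set I)
    (h : ∀ i ∈ T, f i = g i) (w : FreeAbelianGroup I)
    (hw : w ∈ AddSubgroup.closure (FreeAbelianGroup.of '' T)) :
    FreeAbelianGroup.lift f w = FreeAbelianGroup.lift g w := by
  induction hw using AddSubgroup.closure_induction with
  | mem x hx =>
    obtain ⟨i, hi, rfl⟩ := hx
    simpa using h i hi
  | zero => simp
  | add x y _ _ hx hy => rw [map_add, map_add, hx, hy]
  | neg x _ hx => rw [map_neg, map_neg, hx]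

theorem elim_free {I R : Type u} (p : R → I) (hp : Function.Injective p)
    (rk : I → Ordinal.{u}) (rel : R → FreeAbelianGroup I)
    (hrel : ∀ r, rel r + FreeAbelianGroup.of (p r) ∈
      AddSubgroup.closure (FreeAbelianGroup.of '' {j | rk j < rk (p r)}))
    (N : AddSubgroup (FreeAbelianGroup I)) (hN : N = AddSubgroup.closure (Set.range rel)) :
    Module.Free ℤ (FreeAbelianGroup I ⧸ N) := by
  classical
  have wf : WellFounded (fun i j : I => rk i < rk j) := InvImage.wf rk Ordinal.lt_wf
  let B := {i : I // ¬ ∃ r, p r = i}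
  let step : (i : I) → ((j : I) → rk j < rk i → FreeAbelianGroup B) → FreeAbelianGroup B :=
    fun i rec => if h : ∃ r, p r = i then
        FreeAbelianGroup.lift (fun j => if hj : rk j < rk i then rec j hj else 0)
          (rel h.choose + FreeAbelianGroup.of (p h.choose))
      else FreeAbelianGroup.of ⟨i, h⟩
  let f : I → FreeAbelianGroup B := wf.fix step
  have hf : ∀ i, f i = step i (fun j _ => f j) := fun i => wf.fix_eq step i
  have hf1 : ∀ b : B, f b.1 = FreeAbelianGroup.of b := by
    intro b
    rw [hf]
    simp only [step]
    rw [dif_neg b.2]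
  have hf2 : ∀ r, f (p r) = FreeAbelianGroup.lift f (rel r + FreeAbelianGroup.of (p r)) := by
    intro r
    rw [hf]
    have h : ∃ r', p r' = p r := ⟨r, rfl⟩
    simp only [step]
    rw [dif_pos h]
    have e : h.choose = r := hp h.choose_spec
    rw [e]
    refine lift_congr_closure _ _ _ ?_ _ (hrel r)
    intro i hi
    change rk i < rk (p r) at hi
    simp [hi]
  have hker : N ≤ (FreeAbelianGroup.lift f).ker := by
    rw [hN, AddSubgroup.closure_le]
    rintro _ ⟨r, rfl⟩
    have := hf2 r
    rw [map_add, FreeAbelianGroup.lift_apply_of] at this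
    simpa using this
  let φ : FreeAbelianGroup I ⧸ N →+ FreeAbelianGroup B :=
    QuotientAddGroup.lift N (FreeAbelianGroup.lift f) hker
  let ψ : FreeAbelianGroup B →+ FreeAbelianGroup I ⧸ N :=
    FreeAbelianGroup.lift (fun b => QuotientAddGroup.mk' N (FreeAbelianGroup.of b.1))
  have h1 : φ.comp ψ = AddMonoidHom.id _ := by
    ext b
    simp [φ, ψ, hf1]
  have key : ∀ i, ψ (f i) = QuotientAddGroup.mk' N (FreeAbelianGroup.of i) := by
    intro i
    induction i using wf.induction with
    | _ i ih =>
      by_cases h : ∃ r, p r = i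
      · obtain ⟨r, rfl⟩ := h
        have e1 : ∀ w, ψ (FreeAbelianGroup.lift f w)
            = FreeAbelianGroup.lift (fun j => ψ (f j)) w := by
          intro w
          have : ψ.comp (FreeAbelianGroup.lift f) = FreeAbelianGroup.lift (fun j => ψ (f j)) := by
            ext j; simp
          exact DFunLike.congr_fun this w
        have e2 : ∀ w, QuotientAddGroup.mk' N w = FreeAbelianGroup.lift
            (fun j => QuotientAddGroup.mk' N (FreeAbelianGroup.of j)) w := by
          intro w
          have : QuotientAddGroup.mk' N = FreeAbelianGroup.lift
            (fun j => QuotientAddGroup.mk' N (FreeAbelianGroup.of j)) := by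
            ext j; simp
          exact DFunLike.congr_fun this w
        rw [hf2, e1, lift_congr_closure _ (fun j => QuotientAddGroup.mk' N (FreeAbelianGroup.of j))
          _ (fun j hj => ih j hj) _ (hrel r), ← e2, map_add]
        have : QuotientAddGroup.mk' N (rel r) = 0 := by
          have : rel r ∈ N := by
            rw [hN]; exact AddSubgroup.subset_closure ⟨r, rfl⟩
          simpa using this
        rw [this, zero_add]
      · have := hf1 ⟨i, h⟩
        simp only at this
        rw [this]
        simp [ψ]
  have h2 : ψ.comp φ = AddMonoidHom.id _ := by
    ext i
    simpa [φ] using key i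
  let E : FreeAbelianGroup B ≃+ FreeAbelianGroup I ⧸ N :=
    { ψ with
      invFun := φ
      left_inv := fun x => DFunLike.congr_fun h1 x
      right_inv := fun x => DFunLike.congr_fun h2 x }
  exact Module.Free.of_equiv E.toIntLinearEquiv

theorem restrictAt_inj {k : ℕ} {S : Type u} {η η' : Fin (k + 1) → ℕ → S} {m m' : Fin (k + 1)}
    {n n' : ℕ} (h : restrictAt η m n = restrictAt η' m' n') : m = m' ∧ n = n' := by
  have h1 := congrArg Res.m h
  have h2 := congrArg (fun r => r.seq.length) h
  simp [restrictAt] at h1 h2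
  exact ⟨h1, h2⟩

theorem restrictAt_mono {k : ℕ} {S : Type u} {η η' : Fin (k + 1) → ℕ → S} {m : Fin (k + 1)}
    {n n' : ℕ} (hn : n ≤ n') (h : restrictAt η m n' = restrictAt η' m n') :
    restrictAt η m n = restrictAt η' m n := by
  simp only [restrictAt, Res.mk.injEq, heq_eq_eq, true_and] at h ⊢
  refine ⟨?_, h.2⟩
  have h1 := List.ofFn_injective h.1
  congr 1
  ext i
  exact congrFun h1 ⟨i, i.2.trans_le hn⟩

theorem main_free {k : ℕ} {S : Type u} (Λ : Set (Fin (k + 1) → ℕ → S)) (a : ↥Λ → ℕ → ℤ)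
    (o : Ordinal.{u}) (od : Λ → Ordinal.{u}) (hod : Function.Injective od) (hlt : ∀ η, od η < o)
    (M : Λ → Fin (k + 1)) (K : Λ → ℕ)
    (hfresh : ∀ η η' : Λ, od η' < od η → restrictAt η.1 (M η) (K η) ≠ restrictAt η'.1 (M η) (K η)) :
    Module.Free ℤ (Gx a) := by
  classical
  have fresh : ∀ (η η' : Λ) (n : ℕ), K η ≤ n → od η' < od η →
      restrictAt η.1 (M η) n ≠ restrictAt η'.1 (M η) n :=
    fun η η' n hn h e => hfresh η η' h (restrictAt_mono hn e)
  -- `own ν η`: ν is a pivot of η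
  let own : LambdaRes Λ → Λ → Prop := fun ν η => ∃ n, K η ≤ n ∧ ν.1 = restrictAt η.1 (M η) n
  have own_unique : ∀ ν η η', own ν η → own ν η' → η = η' := by
    rintro ν η η' ⟨n, hn, h⟩ ⟨n', hn', h'⟩
    rw [h] at h'
    obtain ⟨e1, rfl⟩ := restrictAt_inj h'
    rcases lt_trichotomy (od η) (od η') with hl | hl | hl
    · exact (fresh η' η n hn' hl (by rw [← h', e1])).elim
    · exact hod hl
    · exact (fresh η η' n hn hl (by rw [h', e1])).elim
  let rk : Gen k S Λ → Ordinal.{u} := fun g => match g with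
    | .X ν => if h : ∃ η, own ν η then Order.succ (od h.choose) else 0
    | .Y η n => if n < K η then o + ((K η - n : ℕ) : Ordinal.{u}) else 0
    | .Z => 0
  have rkX : ∀ ν η, own ν η → rk (.X ν) = Order.succ (od η) := by
    intro ν η h
    have h' : ∃ η, own ν η := ⟨η, h⟩
    simp only [rk]
    rw [dif_pos h', own_unique ν _ _ h'.choose_spec h]
  have rkX' : ∀ ν, rk (.X ν) ≤ o := by
    intro ν
    by_cases h : ∃ η, own ν η
    · obtain ⟨η, h⟩ := h
      rw [rkX ν η h]
      exact Order.succ_le_of_lt (hlt η)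
    · simp only [rk]
      rw [dif_neg h]
      exact zero_le
  let p : Λ × ℕ → Gen k S Λ := fun r =>
    if r.2 < K r.1 then .Y r.1 r.2 else .X (resMem r.1 (M r.1) r.2)
  have ownp : ∀ η n, K η ≤ n → own (resMem η (M η) n) η := fun η n h => ⟨n, h, rfl⟩
  have hp : Function.Injective p := by
    rintro ⟨η, n⟩ ⟨η', n'⟩ h
    simp only [p] at h
    split_ifs at h with h1 h2 h2
    · simpa using h
    · injection h with h
      push Not at h1 h2
      have e := own_unique _ _ _ (ownp η n h1) (h ▸ ownp η' n' h2)
      have := (restrictAt_inj (congrArg Subtype.val h)).2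
      simp [e, this]
  refine elim_free p hp rk (fun r => relEl a r.1 r.2) ?_ (relSub a) ?_
  · rintro ⟨η, n⟩
    have gen : ∀ j, rk j < rk (p (η, n)) → FreeAbelianGroup.of j ∈
      AddSubgroup.closure (FreeAbelianGroup.of '' {j | rk j < rk (p (η, n))}) :=
      fun j hj => AddSubgroup.subset_closure ⟨j, hj, rfl⟩
    by_cases hn : n < K η
    · have hpe : p (η, n) = .Y η n := by simp [p, hn]
      have hr : rk (p (η, n)) = o + ((K η - n : ℕ) : Ordinal.{u}) := by
        rw [hpe]; simp only [rk]; rw [if_pos hn]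
      have ho : o < rk (p (η, n)) := by
        rw [hr]
        have : (0 : Ordinal.{u}) < ((K η - n : ℕ) : Ordinal.{u}) := by
          exact_mod_cast Nat.sub_pos_of_lt hn
        simpa using this
      have e : relEl a η n + FreeAbelianGroup.of (p (η, n)) =
        (n.factorial : ℤ) • FreeAbelianGroup.of (Gen.Y η (n + 1))
        - a η n • FreeAbelianGroup.of Gen.Z
        - ∑ m : Fin (k + 1), FreeAbelianGroup.of (Gen.X (resMem η m n)) := by
        rw [hpe, relEl]; abel
      rw [e]
      refine sub_mem (sub_mem (zsmul_mem (gen _ ?_) _) (zsmul_mem (gen _ ?_) _))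
        (sum_mem fun m _ => gen _ ?_)
      · rw [hr]
        simp only [rk]
        split_ifs with h
        · have : K η - (n + 1) < K η - n := by omega
          have : ((K η - (n + 1) : ℕ) : Ordinal.{u}) < ((K η - n : ℕ) : Ordinal.{u}) := by
            exact_mod_cast this
          simpa using this
        · rw [← hr]; exact zero_le.trans_lt ho
      · exact zero_le.trans_lt ho
      · exact (rkX' _).trans_lt ho
    · push Not at hn
      have hpe : p (η, n) = .X (resMem η (M η) n) := by simp [p, hn]
      have hr : rk (p (η, n)) = Order.succ (od η) := by
        rw [hpe]; exact rkX _ _ (ownp η n hn)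
      have h0 : 0 < rk (p (η, n)) := by rw [hr]; exact zero_le.trans_lt (Order.lt_succ (od η))
      have e : relEl a η n + FreeAbelianGroup.of (p (η, n)) =
        (n.factorial : ℤ) • FreeAbelianGroup.of (Gen.Y η (n + 1))
        - FreeAbelianGroup.of (Gen.Y η n)
        - a η n • FreeAbelianGroup.of Gen.Z
        - ∑ m ∈ Finset.univ.erase (M η), FreeAbelianGroup.of (Gen.X (resMem η m n)) := by
        rw [hpe, relEl, ← Finset.add_sum_erase _ _ (Finset.mem_univ (M η))]; abel
      rw [e]
      refine sub_mem (sub_mem (sub_mem (zsmul_mem (gen _ ?_) _) (gen _ ?_)) (zsmul_mem (gen _ ?_) _))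
        (sum_mem fun m hm => gen _ ?_)
      · have : ¬ (n + 1 < K η) := by omega
        simpa [rk, this] using h0
      · have : ¬ (n < K η) := by omega
        simpa [rk, this] using h0
      · exact h0
      · have hm : m ≠ M η := Finset.ne_of_mem_erase hm
        by_cases h : ∃ η', own (resMem η m n) η'
        · obtain ⟨η', h⟩ := h
          rw [rkX _ _ h, hr]
          obtain ⟨n', hn', h⟩ := h
          change restrictAt η.1 m n = _ at h
          obtain ⟨rfl, rfl⟩ := restrictAt_inj h
          apply Order.succ_lt_succ
          rcases lt_trichotomy (od η') (od η) with hl | hl | hl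
          · exact hl
          · exact (hm (by rw [hod hl])).elim
          · exact (fresh η' η n hn' hl h.symm).elim
        · have : rk (.X (resMem η m n)) = 0 := by
            simp only [rk]; rw [dif_neg h]
          rw [this]; exact h0
  · rw [relSub]
    congr 1
    ext g
    constructor
    · rintro ⟨η, n, rfl⟩; exact ⟨(η, n), rfl⟩
    · rintro ⟨⟨η, n⟩, rfl⟩; exact ⟨η, n, rfl⟩

end Sh883

open Sh883 in
/-- Let `x = (S, Λ, a)` be an abelian-group `k`-parameter whose
underlying combinatorial `k`-parameter `(S, Λ)` is free.  Then `G_x` is a free abelian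
group. -/
theorem stmt8 {k : ℕ} {S : Type u} (Λ : Set (Fin (k + 1) → ℕ → S)) (a : ↥Λ → ℕ → ℤ)
    (hfree : CombFree Λ) :
    Module.Free ℤ (Gx a) := by
  obtain ⟨o, e, he, hr, h⟩ := hfree
  choose M K hMK using h
  have hs : ∀ η : Λ, ∃ α, e α = η.1 := fun η => by
    have : η.1 ∈ Set.range e := hr ▸ η.2
    exact this
  choose d hd using hs
  refine main_free Λ a o (fun η => (d η).1) ?_ (fun η => (d η).2) (fun η => M (d η))
    (fun η => K (d η)) ?_
  · intro η η' h
    have h : d η = d η' := Subtype.ext h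
    apply Subtype.ext
    rw [← hd η, ← hd η', h]
  · intro η η' h
    have := hMK (d η) (d η') h
    rwa [hd, hd] at this
end

section
/- Let x = (S, Λ, a) be an abelian-group k-parameter, let U be a set of functions from ℕ to S, and let u be a finite set of functions from ℕ to S disjoint from U. Then G_{U,u} is a subgroup of G_{U∪u}; moreover G_{U,u} is a pure subgroup of G_{U∪u}, and G_{U∪u} is a pure subgroup of G_x. -/
open Cardinal

namespace Sh883

/-- The image of the generator `x_ν` in `G_x`. -/
def xg {k : ℕ} {S : Type u} {Λ : Set (Fin (k + 1) → ℕ → S)} (a : ↥Λ → ℕ → ℤ)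
    (ν : ↥(LambdaRes Λ)) : Gx a :=
  QuotientAddGroup.mk (FreeAbelianGroup.of (Gen.X ν))

/-- The image of the generator `y_{η̄,n}` in `G_x`. -/
def yg {k : ℕ} {S : Type u} {Λ : Set (Fin (k + 1) → ℕ → S)} (a : ↥Λ → ℕ → ℤ)
    (η : ↥Λ) (n : ℕ) : Gx a :=
  QuotientAddGroup.mk (FreeAbelianGroup.of (Gen.Y η n))

/-- The image of the distinguished generator `z` in `G_x`. -/
def zg {k : ℕ} {S : Type u} {Λ : Set (Fin (k + 1) → ℕ → S)} (a : ↥Λ → ℕ → ℤ) : Gx a :=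
  QuotientAddGroup.mk (FreeAbelianGroup.of Gen.Z)

/-- The subgroup `G_U` of `G_x`, for a set `U` of functions `ℕ → S`: generated by `z`,
the `y_{η̄,n}` for `η̄ ∈ Λ` with all coordinates in `U`, and the `x_{η̄↾⟨m,n⟩}` for
`η̄` a `(k+1)`-tuple of members of `U` with `η̄↾⟨m,n⟩ ∈ Λ_m`. -/
def GU {k : ℕ} {S : Type u} {Λ : Set (Fin (k + 1) → ℕ → S)} (a : ↥Λ → ℕ → ℤ)
    (U : Set (ℕ → S)) : AddSubgroup (Gx a) :=
  AddSubgroup.closure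
    ({zg a}
      ∪ {g | ∃ (η : ↥Λ) (n : ℕ),
          (∀ l : Fin (k + 1), (η : Fin (k + 1) → ℕ → S) l ∈ U) ∧ g = yg a η n}
      ∪ {g | ∃ (η : Fin (k + 1) → ℕ → S) (m : Fin (k + 1)) (n : ℕ) (ν : ↥(LambdaRes Λ)),
          (∀ l : Fin (k + 1), η l ∈ U) ∧ (ν : Res k S) = restrictAt η m n ∧ g = xg a ν})

/-- The subgroup `G_{U,u}` of `G_x`: generated by the union of the subgroups
`G_{U ∪ (u ∖ {η})}` for `η ∈ u`. -/
def GUu {k : ℕ} {S : Type u} {Λ : Set (Fin (k + 1) → ℕ → S)} (a : ↥Λ → ℕ → ℤ)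
    (U u : Set (ℕ → S)) : AddSubgroup (Gx a) :=
  ⨆ η ∈ u, GU a (U ∪ (u \ {η}))

end Sh883

namespace Sh883

section aux
variable {k : ℕ} {S : Type u} {Λ : Set (Fin (k + 1) → ℕ → S)} (a : ↥Λ → ℕ → ℤ)

theorem rel_eq (η : ↥Λ) (n : ℕ) :
    yg a η n = (n.factorial : ℤ) • yg a η (n + 1) - a η n • zg a
      - ∑ m : Fin (k + 1), xg a (resMem η m n) := by
  have h : (QuotientAddGroup.mk' (relSub a)) (relEl a η n) = 0 :=
    (QuotientAddGroup.eq_zero_iff _).2 (AddSubgroup.subset_closure ⟨η, n, rfl⟩)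
  have h2 : (n.factorial : ℤ) • yg a η (n + 1) - yg a η n - a η n • zg a
      - ∑ m : Fin (k + 1), xg a (resMem η m n) = 0 := by
    rw [← h, relEl, map_sub, map_sub, map_sub, map_zsmul, map_zsmul, map_sum]
    rfl
  rw [← sub_eq_zero, ← neg_eq_zero, ← h2]
  abel

/-- Values of the functional on `y`. -/
noncomputable def yval (p : ↥(LambdaRes Λ) → ℚ) (q : ↥Λ → ℚ) (η : ↥Λ) : ℕ → ℚ
  | 0 => q η
  | n + 1 => (yval p q η n + ∑ m : Fin (k + 1), p (resMem η m n)) / (n.factorial : ℚ)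

/-- Values of the functional on generators. -/
noncomputable def gval (p : ↥(LambdaRes Λ) → ℚ) (q : ↥Λ → ℚ) : Gen k S Λ → ℚ
  | Gen.X ν => p ν
  | Gen.Y η n => yval p q η n
  | Gen.Z => 0

/-- The functional. -/
noncomputable def Phi (p : ↥(LambdaRes Λ) → ℚ) (q : ↥Λ → ℚ) : Gx a →+ ℚ :=
  QuotientAddGroup.lift (relSub a) (FreeAbelianGroup.lift (gval p q)) (by
    unfold relSub
    rw [AddSubgroup.closure_le]
    rintro g ⟨η, n, rfl⟩
    have hn : (n.factorial : ℚ) ≠ 0 := by exact_mod_cast n.factorial_ne_zero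
    simp only [SetLike.mem_coe, AddMonoidHom.mem_ker, relEl, map_sub, map_zsmul, map_sum,
      FreeAbelianGroup.lift_apply_of, gval, yval, zsmul_eq_mul]
    push_cast
    field_simp
    ring)

theorem Phi_x (p : ↥(LambdaRes Λ) → ℚ) (q : ↥Λ → ℚ) (ν) : Phi a p q (xg a ν) = p ν :=
  FreeAbelianGroup.lift_apply_of _ _
theorem Phi_y (p : ↥(LambdaRes Λ) → ℚ) (q : ↥Λ → ℚ) (η n) :
    Phi a p q (yg a η n) = yval p q η n :=
  FreeAbelianGroup.lift_apply_of _ _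
theorem Phi_z (p : ↥(LambdaRes Λ) → ℚ) (q : ↥Λ → ℚ) : Phi a p q (zg a) = 0 :=
  FreeAbelianGroup.lift_apply_of _ _

theorem yval_zero (p : ↥(LambdaRes Λ) → ℚ) (q : ↥Λ → ℚ) (η : ↥Λ) (hq : q η = 0)
    (hp : ∀ m n, p (resMem η m n) = 0) (n : ℕ) : yval p q η n = 0 := by
  induction n with
  | zero => exact hq
  | succ n ih => simp [yval, ih, hp]

theorem yval_ne (q : ↥Λ → ℚ) (η : ↥Λ) (hq : q η ≠ 0) (n : ℕ) :
    yval (fun _ => 0) q η n ≠ 0 := by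
  induction n with
  | zero => exact hq
  | succ n ih => simp [yval, ih, n.factorial_ne_zero]

/-- Stage `N`. -/
def RN (N : ℕ) : Submodule ℤ (Gx a) :=
  Submodule.span ℤ {zg a} ⊔ Submodule.span ℤ (Set.range (xg a))
    ⊔ Submodule.span ℤ (Set.range (fun η => yg a η N))

theorem z_mem (N : ℕ) : zg a ∈ RN a N :=
  Submodule.mem_sup_left (Submodule.mem_sup_left (Submodule.mem_span_singleton_self _))
theorem x_mem (N : ℕ) (ν) : xg a ν ∈ RN a N :=
  Submodule.mem_sup_left (Submodule.mem_sup_right (Submodule.subset_span ⟨ν, rfl⟩))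
theorem y_mem (N : ℕ) (η) : yg a η N ∈ RN a N :=
  Submodule.mem_sup_right (Submodule.subset_span ⟨η, rfl⟩)

theorem RN_mono : Monotone (RN a) := by
  refine monotone_nat_of_le_succ fun N => ?_
  refine sup_le (sup_le ?_ ?_) ?_
  · rw [Submodule.span_le]; rintro _ rfl; exact z_mem a _
  · rw [Submodule.span_le]; rintro _ ⟨ν, rfl⟩; exact x_mem a _ ν
  · rw [Submodule.span_le]; rintro _ ⟨η, rfl⟩
    show yg a η N ∈ RN a (N + 1)
    rw [rel_eq]
    exact Submodule.sub_mem _ (Submodule.sub_mem _ (Submodule.smul_mem _ _ (y_mem a _ η))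
      (Submodule.smul_mem _ _ (z_mem a _))) (Submodule.sum_mem _ fun m _ => x_mem a _ _)

theorem exists_RN (g : Gx a) : ∃ N, g ∈ RN a N := by
  obtain ⟨w, rfl⟩ := QuotientAddGroup.mk'_surjective (relSub a) g
  induction w using FreeAbelianGroup.induction_on with
  | zero => exact ⟨0, by rw [map_zero]; exact Submodule.zero_mem _⟩
  | of x =>
    cases x with
    | X ν => exact ⟨0, x_mem a 0 ν⟩
    | Y η n => exact ⟨n, y_mem a n η⟩
    | Z => exact ⟨0, z_mem a 0⟩
  | neg x h =>
    obtain ⟨N, h⟩ := h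
    exact ⟨N, by rw [map_neg]; exact Submodule.neg_mem _ h⟩
  | add x y hx hy =>
    obtain ⟨N, hx⟩ := hx
    obtain ⟨N', hy⟩ := hy
    refine ⟨max N N', ?_⟩
    rw [map_add]
    exact Submodule.add_mem _ (RN_mono a (le_max_left _ _) hx) (RN_mono a (le_max_right _ _) hy)

theorem pure_aux (M : AddSubgroup (Gx a)) (A : Set ↥(LambdaRes Λ)) (B : Set ↥Λ)
    (hz : zg a ∈ M) (hA : ∀ ν ∈ A, xg a ν ∈ M) (hB : ∀ η ∈ B, ∀ n, yg a η n ∈ M)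
    (hcl : ∀ η ∈ B, ∀ m n, resMem η m n ∈ A)
    (hM : ∀ f : Gx a →+ ℚ, f (zg a) = 0 → (∀ ν ∈ A, f (xg a ν) = 0) →
      (∀ η ∈ B, ∀ n, f (yg a η n) = 0) → M ≤ f.ker)
    (n : ℕ) (hn : 0 < n) (g : Gx a) (hg : n • g ∈ M) : g ∈ M := by
  classical
  have key : ∀ p q, (∀ ν ∈ A, p ν = 0) → (∀ η ∈ B, q η = 0) → M ≤ (Phi a p q).ker := by
    intro p q hp hq
    apply hM
    · exact Phi_z a p q
    · intro ν hν; rw [Phi_x, hp ν hν]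
    · intro η hη n
      rw [Phi_y]
      exact yval_zero p q η (hq η hη) (fun m n => hp _ (hcl η hη m n)) n
  have key2 : ∀ p q, (∀ ν ∈ A, p ν = 0) → (∀ η ∈ B, q η = 0) → Phi a p q g = 0 := by
    intro p q hp hq
    have := key p q hp hq hg
    rw [AddMonoidHom.mem_ker, map_nsmul, nsmul_eq_mul] at this
    rcases mul_eq_zero.1 this with h | h
    · exact absurd (Nat.cast_eq_zero.1 h) hn.ne'
    · exact h
  obtain ⟨N, hN⟩ := exists_RN a g
  obtain ⟨g1, h1, g2, h2, rfl⟩ := Submodule.mem_sup.1 hN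
  obtain ⟨g3, h3, g4, h4, rfl⟩ := Submodule.mem_sup.1 h1
  obtain ⟨e, rfl⟩ := Submodule.mem_span_singleton.1 h3
  obtain ⟨c, rfl⟩ := Finsupp.mem_span_range_iff_exists_finsupp.1 h4
  obtain ⟨d, rfl⟩ := Finsupp.mem_span_range_iff_exists_finsupp.1 h2
  have hd : ∀ η ∉ B, d η = 0 := by
    intro η hη
    have := key2 (fun _ => 0) (fun η' => if η' = η then 1 else 0) (by simp)
      (by intro η' h'; rw [if_neg]; rintro rfl; exact hη h')
    simp only [Finsupp.sum, map_add, map_zsmul, map_sum, Phi_z, Phi_x, Phi_y, smul_zero,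
      Finset.sum_const_zero, zero_add] at this
    rw [Finset.sum_eq_single η] at this
    · rw [zsmul_eq_mul] at this
      rcases mul_eq_zero.1 this with h | h
      · exact_mod_cast h
      · exact absurd h (yval_ne _ η (by simp) N)
    · intro b _ hb
      rw [yval_zero _ _ b (by simp [hb]) (by simp), smul_zero]
    · intro h
      rw [Finsupp.notMem_support_iff.1 h, zero_smul]
  have hdM : (d.sum fun i x => x • yg a i N) ∈ M := by
    refine AddSubgroup.sum_mem _ fun η hη => AddSubgroup.zsmul_mem _ (hB η ?_ N) _
    by_contra h
    exact Finsupp.mem_support_iff.1 hη (hd η h)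
  have hc : ∀ ν ∉ A, c ν = 0 := by
    intro ν hν
    have hp : ∀ ν' ∈ A, (if ν' = ν then (1 : ℚ) else 0) = 0 := by
      intro ν' h'; rw [if_neg]; rintro rfl; exact hν h'
    have := key2 (fun ν' => if ν' = ν then 1 else 0) (fun _ => 0) hp (by simp)
    rw [map_add, AddMonoidHom.mem_ker.1 (key _ _ hp (by simp) hdM)] at this
    simp only [Finsupp.sum, map_add, map_zsmul, map_sum, Phi_z, Phi_x, smul_zero,
      zero_add, add_zero] at this
    rw [Finset.sum_eq_single ν] at this
    · simpa using this
    · intro b _ hb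
      simp [hb]
    · intro h
      rw [Finsupp.notMem_support_iff.1 h, zero_smul]
  have hcM : (c.sum fun i x => x • xg a i) ∈ M := by
    refine AddSubgroup.sum_mem _ fun ν hν => AddSubgroup.zsmul_mem _ (hA ν ?_) _
    by_contra h
    exact Finsupp.mem_support_iff.1 hν (hc ν h)
  exact AddSubgroup.add_mem _ (AddSubgroup.add_mem _ (AddSubgroup.zsmul_mem _ hz _) hcM) hdM

/-- x-part -/
def AU (Λ : Set (Fin (k + 1) → ℕ → S)) (U : Set (ℕ → S)) : Set ↥(LambdaRes Λ) :=
  {ν | ∃ (η : Fin (k + 1) → ℕ → S) (m : Fin (k + 1)) (n : ℕ),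
    (∀ l : Fin (k + 1), η l ∈ U) ∧ (ν : Res k S) = restrictAt η m n}

/-- y-part -/
def BU (Λ : Set (Fin (k + 1) → ℕ → S)) (U : Set (ℕ → S)) : Set ↥Λ :=
  {η | ∀ l : Fin (k + 1), (η : Fin (k + 1) → ℕ → S) l ∈ U}

theorem GU_z (U) : zg a ∈ GU a U := AddSubgroup.subset_closure (Or.inl (Or.inl rfl))
theorem GU_x (U) : ∀ ν ∈ AU Λ U, xg a ν ∈ GU a U := by
  rintro ν ⟨η, m, n, h1, h2⟩
  exact AddSubgroup.subset_closure (Or.inr ⟨η, m, n, ν, h1, h2, rfl⟩)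
theorem GU_y (U) : ∀ η ∈ BU Λ U, ∀ n, yg a η n ∈ GU a U := by
  intro η h n
  exact AddSubgroup.subset_closure (Or.inl (Or.inr ⟨η, n, h, rfl⟩))
theorem GU_cl (U) : ∀ η ∈ BU Λ U, ∀ m n, resMem η m n ∈ AU Λ U :=
  fun η h m n => ⟨η, m, n, h, rfl⟩
theorem GU_le (U) (K : AddSubgroup (Gx a)) (hz : zg a ∈ K) (hx : ∀ ν ∈ AU Λ U, xg a ν ∈ K)
    (hy : ∀ η ∈ BU Λ U, ∀ n, yg a η n ∈ K) : GU a U ≤ K := by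
  unfold GU
  rw [AddSubgroup.closure_le]
  rintro g ((rfl | ⟨η, n, h, rfl⟩) | ⟨η, m, n, ν, h1, h2, rfl⟩)
  · exact hz
  · exact hy η h n
  · exact hx ν ⟨η, m, n, h1, h2⟩

theorem GU_mono {U V : Set (ℕ → S)} (h : U ⊆ V) : GU a U ≤ GU a V := by
  refine GU_le a U _ (GU_z a V) ?_ ?_
  · rintro ν ⟨η, m, n, h1, h2⟩
    exact GU_x a V ν ⟨η, m, n, fun l => h (h1 l), h2⟩
  · intro η hη n
    exact GU_y a V η (fun l => h (hη l)) n

end aux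

end Sh883

open Sh883 in
/-- Let `x = (S, Λ, a)` be an abelian-group `k`-parameter, `U` a set of
functions `ℕ → S` and `u` a finite set of functions `ℕ → S` disjoint from `U`.  Then
`G_{U,u}` is a subgroup of `G_{U∪u}`; moreover `G_{U,u}` is a pure subgroup of `G_{U∪u}`
and `G_{U∪u}` is a pure subgroup of `G_x`. -/
theorem stmt18 {k : ℕ} {S : Type u} (Λ : Set (Fin (k + 1) → ℕ → S)) (a : ↥Λ → ℕ → ℤ)
    (U u : Set (ℕ → S)) (hufin : u.Finite) (hdisj : Disjoint U u) :
    GUu a U u ≤ GU a (U ∪ u) ∧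
      (∀ n : ℕ, 0 < n → ∀ g ∈ GUu a U u,
        (∃ y ∈ GU a (U ∪ u), n • y = g) → ∃ y ∈ GUu a U u, n • y = g) ∧
      (∀ n : ℕ, 0 < n → ∀ g ∈ GU a (U ∪ u),
        (∃ y : Gx a, n • y = g) → ∃ y ∈ GU a (U ∪ u), n • y = g) := by
  refine ⟨?_, ?_, ?_⟩
  · refine iSup₂_le fun η _ => GU_mono a ?_
    exact Set.union_subset_union_right _ Set.diff_subset
  · rintro n hn g hg ⟨y, -, hy⟩
    rcases u.eq_empty_or_nonempty with rfl | ⟨η₀, hη₀⟩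
    · refine ⟨0, AddSubgroup.zero_mem _, ?_⟩
      simp only [GUu, Set.mem_empty_iff_false, iSup_false, iSup_bot, AddSubgroup.mem_bot] at hg
      rw [hg, smul_zero]
    · refine ⟨y, ?_, hy⟩
      have hle : ∀ η ∈ u, GU a (U ∪ (u \ {η})) ≤ GUu a U u := fun η hη =>
        le_iSup₂_of_le η hη le_rfl
      refine pure_aux a (GUu a U u) {ν | ∃ η ∈ u, ν ∈ AU Λ (U ∪ (u \ {η}))}
        {ν | ∃ η ∈ u, ν ∈ BU Λ (U ∪ (u \ {η}))} (hle η₀ hη₀ (GU_z a _)) ?_ ?_ ?_ ?_ n hn y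
        (hy ▸ hg)
      · rintro ν ⟨η, hη, h⟩
        exact hle η hη (GU_x a _ ν h)
      · rintro ν ⟨η, hη, h⟩ n
        exact hle η hη (GU_y a _ ν h n)
      · rintro ν ⟨η, hη, h⟩ m n
        exact ⟨η, hη, GU_cl _ ν h m n⟩
      · intro f hz hx hy
        exact iSup₂_le fun η hη => GU_le a _ _ hz (fun ν h => hx ν ⟨η, hη, h⟩)
          (fun ν h => hy ν ⟨η, hη, h⟩)
  · rintro n hn g hg ⟨y, hy⟩
    exact ⟨y, pure_aux a _ (AU Λ (U ∪ u)) (BU Λ (U ∪ u)) (GU_z a _) (GU_x a _) (GU_y a _)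
      (GU_cl _) (fun f hz hx hy => GU_le a _ _ hz hx hy) n hn y (hy ▸ hg), hy⟩
end
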